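/- Let 4 ≤ p < q, n = p + q, and suppose 2p > q + 4. Every tree T ∈ 𝒯_n^{p,q} that is isomorphic to none of B_{p,q}^{0,0}, B_{p,q}^{0,1}, D_{p,q}^{0,1} satisfies T ≺_s D_{p,q}^{0,1}; that is, in this case D_{p,q}^{0,1} is the unique third last tree in the S-order among 𝒯_n^{p,q}. -/

import Mathlib

open SimpleGraph

open scoped Classical in
/-- The adjacency matrix of a simple graph, with real entries. -/
noncomputable def adjMat {V : Type*} [Fintype V] (G : SimpleGraph V) : Matrix V V ℝ :=
  Matrix.of fun a b => if G.Adj a b then 1 else 0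

/-- The `k`-th spectral moment `S_k(G) = tr(A(G)^k)`. -/
noncomputable def spectralMoment {V : Type*} [Fintype V] [DecidableEq V]
    (G : SimpleGraph V) (k : ℕ) : ℝ :=
  Matrix.trace (adjMat G ^ k)

/-- `SLt G₁ G₂` means `G₁ ≺_s G₂`: for some `k` with `1 ≤ k ≤ n - 1`,
`S_i(G₁) = S_i(G₂)` for all `i < k` and `S_k(G₁) < S_k(G₂)`. -/
def SLt {V : Type*} [Fintype V] [DecidableEq V] (G₁ G₂ : SimpleGraph V) : Prop :=
  ∃ k : ℕ, 1 ≤ k ∧ k ≤ Fintype.card V - 1 ∧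
    (∀ i < k, spectralMoment G₁ i = spectralMoment G₂ i) ∧
    spectralMoment G₁ k < spectralMoment G₂ k

/-- The tree `B_{p,q}^{k,l}` on `p + q` vertices: vertex `0 = u` is adjacent to `1 = v`
and to the `q - 1` vertices `2, …, q`; the distinguished neighbor `2` of `u` carries the
`k` pendant leaves `q+1, …, q+k`; the `l` neighbors `3, …, l+2` of `u` carry one pendant
leaf each (`q+k+j` is attached to `j+2` for `1 ≤ j ≤ l`); and `v` carries the
`p - k - l - 1` pendant leaves `q+k+l+1, …, p+q-1`. -/
def BTree (p q k l : ℕ) : SimpleGraph (Fin (p + q)) :=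
  SimpleGraph.fromRel (fun a b =>
    (a.val = 0 ∧ b.val = 1) ∨
    (a.val = 0 ∧ 2 ≤ b.val ∧ b.val ≤ q) ∨
    (a.val = 2 ∧ q + 1 ≤ b.val ∧ b.val ≤ q + k) ∨
    (q + k + 1 ≤ b.val ∧ b.val ≤ q + k + l ∧ a.val = b.val - (q + k) + 2) ∨
    (a.val = 1 ∧ q + k + l + 1 ≤ b.val))

/-- The tree `D_{p,q}^{k,l}` on `p + q` vertices: vertex `1 = v` is adjacent to `0 = u`
and to the `p - 1` vertices `2, …, p`; the distinguished neighbor `2` of `v` carries the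
`k` pendant leaves `p+1, …, p+k`; the `l` neighbors `3, …, l+2` of `v` carry one pendant
leaf each; and `u` carries the `q - k - l - 1` pendant leaves `p+k+l+1, …, p+q-1`. -/
def DTree (p q k l : ℕ) : SimpleGraph (Fin (p + q)) :=
  SimpleGraph.fromRel (fun a b =>
    (a.val = 0 ∧ b.val = 1) ∨
    (a.val = 1 ∧ 2 ≤ b.val ∧ b.val ≤ p) ∨
    (a.val = 2 ∧ p + 1 ≤ b.val ∧ b.val ≤ p + k) ∨
    (p + k + 1 ≤ b.val ∧ b.val ≤ p + k + l ∧ a.val = b.val - (p + k) + 2) ∨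
    (a.val = 0 ∧ p + k + l + 1 ≤ b.val))

/-- `T ∈ 𝒯_{p+q}^{p,q}`: `T` is a tree on `p + q` vertices with a `(p,q)`-bipartition. -/
def TreeBip (p q : ℕ) (G : SimpleGraph (Fin (p + q))) : Prop :=
  G.IsTree ∧ ∃ A : Finset (Fin (p + q)), A.card = p ∧
    ∀ ⦃x y : Fin (p + q)⦄, G.Adj x y → (x ∈ A ↔ y ∉ A)

/-! ### Spectral moments of small order -/

theorem adjMat_eq_adjMatrix {V : Type*} [Fintype V] (G : SimpleGraph V) [DecidableRel G.Adj] :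
    adjMat G = G.adjMatrix ℝ := by
  ext x y
  simp [adjMat, adjMatrix_apply]

theorem spectralMoment_zero {V : Type*} [Fintype V] [DecidableEq V] (G : SimpleGraph V) :
    spectralMoment G 0 = Fintype.card V := by
  simp [spectralMoment]

theorem spectralMoment_one {V : Type*} [Fintype V] [DecidableEq V] (G : SimpleGraph V) :
    spectralMoment G 1 = 0 := by
  classical
  rw [spectralMoment, pow_one, adjMat_eq_adjMatrix, trace_adjMatrix]

theorem spectralMoment_two {V : Type*} [Fintype V] [DecidableEq V] (G : SimpleGraph V)
    [DecidableRel G.Adj] : spectralMoment G 2 = ((∑ x, G.degree x : ℕ) : ℝ) := by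
  rw [spectralMoment, adjMat_eq_adjMatrix, pow_two, Matrix.trace]
  simp only [Matrix.diag_apply, adjMatrix_mul_self_apply_self, Nat.cast_sum]

theorem spectralMoment_three_of_bipartition {V : Type*} [Fintype V] [DecidableEq V]
    {G : SimpleGraph V} {s : Finset V} (hs : ∀ ⦃x y⦄, G.Adj x y → (x ∈ s ↔ y ∉ s)) :
    spectralMoment G 3 = 0 := by
  classical
  rw [spectralMoment, adjMat_eq_adjMatrix, pow_succ, pow_two, Matrix.trace]
  refine Finset.sum_eq_zero fun x _ => ?_
  rw [Matrix.diag_apply, Matrix.mul_apply]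
  refine Finset.sum_eq_zero fun y _ => ?_
  rw [Matrix.mul_apply, Finset.sum_mul]
  refine Finset.sum_eq_zero fun z _ => ?_
  simp only [adjMatrix_apply]
  by_cases hxz : G.Adj x z <;> by_cases hzy : G.Adj z y <;> by_cases hyx : G.Adj y x <;>
    simp [hxz, hzy, hyx]
  have := hs hxz
  have := hs hzy
  have := hs hyx
  tauto

/-- In a graph in which two distinct vertices have at most one common neighbor, the fourth
spectral moment is determined by the degrees. -/
theorem spectralMoment_four_add {V : Type*} [Fintype V] [DecidableEq V] {G : SimpleGraph V}
    [DecidableRel G.Adj]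
    (hG : ∀ ⦃x y z z'⦄, x ≠ y → G.Adj x z → G.Adj z y → G.Adj x z' → G.Adj z' y → z = z') :
    spectralMoment G 4 + ((∑ x, G.degree x : ℕ) : ℝ) = 2 * ((∑ x, G.degree x ^ 2 : ℕ) : ℝ) := by
  set A := G.adjMatrix ℝ with hA
  have hAsymm : ∀ x y, A y x = A x y := (isSymm_adjMatrix (α := ℝ) G).apply
  have hsymm : ∀ x y, (A * A) y x = (A * A) x y := by
    intro x y
    simp only [Matrix.mul_apply]
    exact Finset.sum_congr rfl fun z _ => by rw [mul_comm, hAsymm x z, hAsymm z y]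
  have hsq : ∀ x y, x ≠ y → (A * A) x y * (A * A) x y = (A * A) x y := by
    intro x y hxy
    by_cases hz : ∃ z, G.Adj x z ∧ G.Adj z y
    · obtain ⟨z, hxz, hzy⟩ := hz
      have : (A * A) x y = 1 := by
        rw [Matrix.mul_apply, Finset.sum_eq_single z]
        · simp [hA, hxz, hzy]
        · intro z' _ hz'
          simp only [hA, adjMatrix_apply]
          by_cases h1 : G.Adj x z' <;> by_cases h2 : G.Adj z' y <;> simp [h1, h2]
          exact hz' (hG hxy h1 h2 hxz hzy)
        · simp
      rw [this, one_mul]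
    · have : (A * A) x y = 0 := by
        rw [Matrix.mul_apply]
        refine Finset.sum_eq_zero fun z _ => ?_
        simp only [hA, adjMatrix_apply]
        by_cases h1 : G.Adj x z <;> by_cases h2 : G.Adj z y <;> simp [h1, h2]
        exact hz ⟨z, h1, h2⟩
      rw [this, zero_mul]
  have hdiag : ∀ x, (A * A) x x = G.degree x := fun x => adjMatrix_mul_self_apply_self G x
  have hrow : ∀ x, ∑ y, (A * A) x y * (A * A) x y + (G.degree x : ℝ) =
      (G.degree x : ℝ) ^ 2 + ∑ y, (A * A) x y := by
    intro x
    rw [← Finset.add_sum_erase _ _ (Finset.mem_univ x),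
      ← Finset.add_sum_erase Finset.univ (fun y => (A * A) x y) (Finset.mem_univ x),
      Finset.sum_congr rfl fun y hy => hsq x y (Finset.ne_of_mem_erase hy).symm, hdiag]
    ring
  have htotal : ∑ x, ∑ y, (A * A) x y = ∑ z, (G.degree z : ℝ) ^ 2 := by
    have hdeg : ∀ z, ∑ y, A z y = G.degree z := by
      intro z
      simp [hA, adjMatrix_apply, ← card_neighborFinset_eq_degree, neighborFinset_eq_filter]
    simp_rw [Matrix.mul_apply]
    calc ∑ x, ∑ y, ∑ z, A x z * A z y = ∑ z, ∑ x, ∑ y, A x z * A z y := by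
          rw [Finset.sum_comm]
          refine (Finset.sum_congr rfl fun y _ => Finset.sum_comm).trans ?_
          rw [Finset.sum_comm]
          exact Finset.sum_congr rfl fun z _ => Finset.sum_comm
      _ = ∑ z, (G.degree z : ℝ) ^ 2 := by
          refine Finset.sum_congr rfl fun z _ => ?_
          rw [← Finset.sum_mul_sum, hdeg, pow_two, ← hdeg z]
          congr 1
          exact Finset.sum_congr rfl fun x _ => hAsymm z x
  have hfour : spectralMoment G 4 = ∑ x, ∑ y, (A * A) x y * (A * A) x y := by
    rw [spectralMoment, adjMat_eq_adjMatrix, show 4 = 2 + 2 from rfl, pow_add, pow_two,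
      Matrix.trace]
    refine Finset.sum_congr rfl fun x _ => ?_
    rw [Matrix.diag_apply, Matrix.mul_apply]
    exact Finset.sum_congr rfl fun y _ => by rw [← hA, hsymm x y]
  have hsum := Finset.sum_congr (rfl : (Finset.univ : Finset V) = _) fun x _ => hrow x
  rw [Finset.sum_add_distrib, Finset.sum_add_distrib, htotal] at hsum
  push_cast
  rw [hfour, hsum]
  ring

theorem SimpleGraph.IsAcyclic.eq_of_common_neighbors {V : Type*} {G : SimpleGraph V}
    (hG : G.IsAcyclic) ⦃x y z z' : V⦄ (hxy : x ≠ y) (hxz : G.Adj x z) (hzy : G.Adj z y)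
    (hxz' : G.Adj x z') (hzy' : G.Adj z' y) : z = z' := by
  have hpath : ∀ {c} (h : G.Adj x c) (h' : G.Adj c y), (Walk.cons h (Walk.cons h' .nil)).IsPath :=
    fun h h' => by simp [h.ne, h'.ne, hxy]
  have := (hG.subsingleton_path x y).elim ⟨_, hpath hxz hzy⟩ ⟨_, hpath hxz' hzy'⟩
  simpa using congrArg (fun w => w.1.snd) this

/-! ### Sums of squares of natural numbers with given sum -/

theorem Finset.eq_zero_of_eq_sum {V : Type*} {s : Finset V} {e : V → ℕ} {m : ℕ}
    (hm : ∑ x ∈ s, e x = m) {x : V} (hx : x ∈ s) (hxm : e x = m) {y : V} (hy : y ∈ s)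
    (hyx : y ≠ x) : e y = 0 := by
  classical
  rw [← Finset.add_sum_erase s e hx] at hm
  have : ∑ y ∈ s.erase x, e y = 0 := by omega
  exact Finset.sum_eq_zero_iff.1 this y (Finset.mem_erase.2 ⟨hyx, hy⟩)

theorem Finset.sum_sq_le_sq_sum {V : Type*} {s : Finset V} {e : V → ℕ} :
    ∑ x ∈ s, e x ^ 2 ≤ (∑ x ∈ s, e x) ^ 2 := by
  rw [pow_two, Finset.sum_mul]
  refine Finset.sum_le_sum fun x hx => ?_
  rw [pow_two]
  exact Nat.mul_le_mul_left _ (Finset.single_le_sum (fun _ _ => Nat.zero_le _) hx)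

theorem Finset.exists_near_sum {V : Type*} {s : Finset V} {e : V → ℕ} {m : ℕ}
    (hm : ∑ x ∈ s, e x = m) {x : V} (hx : x ∈ s) (hxm : e x + 1 = m) :
    (∃ y ∈ s, y ≠ x ∧ e y = 1 ∧ ∀ z ∈ s, z ≠ x → z ≠ y → e z = 0) ∧
      ∑ x ∈ s, e x ^ 2 = (m - 1) ^ 2 + 1 := by
  classical
  rw [← Finset.add_sum_erase s e hx] at hm
  have hrest : ∑ y ∈ s.erase x, e y = 1 := by omega
  obtain ⟨y, hy, hy0⟩ : ∃ y ∈ s.erase x, e y ≠ 0 :=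
    Finset.exists_ne_zero_of_sum_ne_zero (by omega)
  have hy1 : e y = 1 := by
    have := Finset.single_le_sum (f := e) (fun _ _ => Nat.zero_le _) hy
    omega
  have hzero : ∀ z ∈ s.erase x, z ≠ y → e z = 0 := fun z hz hzy =>
    Finset.eq_zero_of_eq_sum hrest hy hy1 hz hzy
  refine ⟨⟨y, Finset.mem_of_mem_erase hy, Finset.ne_of_mem_erase hy, hy1,
    fun z hz hzx hzy => hzero z (Finset.mem_erase.2 ⟨hzx, hz⟩) hzy⟩, ?_⟩
  rw [← Finset.add_sum_erase s _ hx, Finset.sum_eq_single_of_mem y hy, hy1]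
  · rw [← hxm]; simp
  · intro z hz hzy
    simp [hzero z hz hzy]

theorem Finset.sum_sq_trichotomy {V : Type*} {s : Finset V} {e : V → ℕ} {m : ℕ}
    (hm : ∑ x ∈ s, e x = m) (hm2 : 2 ≤ m) :
    (∃ x ∈ s, e x = m) ∨ (∃ x ∈ s, e x + 1 = m) ∨ ∑ x ∈ s, e x ^ 2 ≤ (m - 2) ^ 2 + 4 := by
  classical
  have hs : s.Nonempty := by
    rw [Finset.nonempty_iff_ne_empty]
    rintro rfl
    simp at hm
    omega
  obtain ⟨x, hx, hmax⟩ := s.exists_max_image e hs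
  have hxm : e x ≤ m := hm ▸ Finset.single_le_sum (fun _ _ => Nat.zero_le _) hx
  rcases Nat.lt_or_ge (m - 2) (e x) with hlarge | hsmall
  · rcases Nat.lt_or_ge (e x) m with h | h
    · exact .inr (.inl ⟨x, hx, by omega⟩)
    · exact .inl ⟨x, hx, by omega⟩
  refine .inr (.inr ?_)
  obtain ⟨k, rfl⟩ := Nat.exists_eq_add_of_le' hm2
  simp only [Nat.add_sub_cancel] at hsmall ⊢
  rcases Nat.lt_or_ge (e x) 2 with h1 | h2
  · have : ∑ x ∈ s, e x ^ 2 ≤ ∑ x ∈ s, e x := by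
      refine Finset.sum_le_sum fun y hy => ?_
      have := hmax y hy
      have : e y ≤ 1 := by omega
      nlinarith
    nlinarith [sq_nonneg ((k : ℤ) - 1)]
  · obtain ⟨a, ha⟩ := Nat.exists_eq_add_of_le' h2
    obtain ⟨b, hb⟩ := Nat.exists_eq_add_of_le hsmall
    have hrest := Finset.sum_sq_le_sq_sum (s := s.erase x) (e := e)
    rw [← Finset.add_sum_erase s e hx] at hm
    rw [← Finset.add_sum_erase s _ hx]
    have : ∑ y ∈ s.erase x, e y = b + 2 := by omega
    rw [this] at hrest
    subst hb
    rw [ha] at *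
    nlinarith [Nat.zero_le (a * b)]

/-! ### Double stars and brooms -/

/-- The graph `G` is bipartite with parts `s` and `sᶜ`; the vertex `v ∉ s` is adjacent to all of
`s`, and `u ∈ s` is adjacent to all of `sᶜ`. -/
structure IsDoubleStar {V : Type*} (G : SimpleGraph V) (s : Finset V) (v u : V) : Prop where
  v_notMem : v ∉ s
  u_mem : u ∈ s
  bipartite : ∀ ⦃x y⦄, G.Adj x y → (x ∈ s ↔ y ∉ s)
  adj_iff : ∀ ⦃x y⦄, x ∈ s → y ∉ s → (G.Adj x y ↔ y = v ∨ x = u)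

/-- The graph `G` is bipartite with parts `s` and `sᶜ`; the vertex `v ∉ s` is adjacent to all of
`s`, the vertex `b ∉ s` hangs from `w ∈ s`, and the rest of `sᶜ` hangs from `u ∈ s`. -/
structure IsBroom {V : Type*} (G : SimpleGraph V) (s : Finset V) (v u w b : V) : Prop where
  v_notMem : v ∉ s
  b_notMem : b ∉ s
  u_mem : u ∈ s
  w_mem : w ∈ s
  v_ne_b : v ≠ b
  u_ne_w : u ≠ w
  bipartite : ∀ ⦃x y⦄, G.Adj x y → (x ∈ s ↔ y ∉ s)
  adj_iff : ∀ ⦃x y⦄, x ∈ s → y ∉ s →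
    (G.Adj x y ↔ y = v ∨ (y = b ∧ x = w) ∨ (y ≠ b ∧ x = u))

/-- Colorings with fibers of equal sizes differ by a bijection. -/
theorem exists_equiv_of_card_fiber_eq {V W ι : Type*} [Fintype V] [Fintype W] [DecidableEq ι]
    (c : V → ι) (d : W → ι)
    (h : ∀ i, (Finset.univ.filter (c · = i)).card = (Finset.univ.filter (d · = i)).card) :
    ∃ σ : V ≃ W, ∀ x, d (σ x) = c x := by
  refine ⟨Equiv.ofFiberEquiv (f := c) (g := d) fun i => Fintype.equivOfCardEq ?_,
    fun x => Equiv.ofFiberEquiv_map _ x⟩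
  rw [Fintype.card_subtype, Fintype.card_subtype, h]

/-- A bijection between bipartite graphs that respects the parts and the adjacency between them
is an isomorphism. -/
theorem nonempty_iso_of_bipartition {V W : Type*} {G : SimpleGraph V} {H : SimpleGraph W}
    {s : Finset V} {t : Finset W} (hG : ∀ ⦃x y⦄, G.Adj x y → (x ∈ s ↔ y ∉ s))
    (hH : ∀ ⦃x y⦄, H.Adj x y → (x ∈ t ↔ y ∉ t)) (σ : V ≃ W) (hσ : ∀ x, σ x ∈ t ↔ x ∈ s)
    (hadj : ∀ x ∈ s, ∀ y ∉ s, (H.Adj (σ x) (σ y) ↔ G.Adj x y)) : Nonempty (G ≃g H) := by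
  refine ⟨⟨σ, fun {x y} => ?_⟩⟩
  by_cases hx : x ∈ s <;> by_cases hy : y ∈ s
  · refine iff_of_false (fun hxy => ?_) fun hxy => (hG hxy).1 hx hy
    exact (hH hxy).1 ((hσ x).2 hx) ((hσ y).2 hy)
  · exact hadj x hx y hy
  · rw [H.adj_comm, G.adj_comm]
    exact hadj y hy x hx
  · refine iff_of_false (fun hxy => ?_) fun hxy => hx ((hG hxy).2 hy)
    exact hx ((hσ x).1 ((hH hxy).2 (mt (hσ y).1 hy)))

theorem IsDoubleStar.nonempty_iso {V : Type*} [Fintype V] {G H : SimpleGraph V}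
    {s t : Finset V} {v u v' u' : V} (hG : IsDoubleStar G s v u) (hH : IsDoubleStar H t v' u')
    (hst : s.card = t.card) : Nonempty (G ≃g H) := by
  classical
  let color : Finset V → V → V → V → Fin 4 := fun s v u x =>
    if x ∈ s then (if x = u then 0 else 1) else (if x = v then 2 else 3)
  have hfiber : ∀ {K : SimpleGraph V} {r : Finset V} {a b : V}, IsDoubleStar K r a b → ∀ i,
      (Finset.univ.filter (color r a b · = i)).card =
        ![1, r.card - 1, 1, rᶜ.card - 1] i := by
    intro K r a b hK i
    have ha := hK.v_notMem
    have hb := hK.u_mem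
    have hset : Finset.univ.filter (color r a b · = i) =
        ![{b}, r.erase b, {a}, rᶜ.erase a] i := by
      ext x
      fin_cases i <;> simp [color] <;> grind
    rw [hset]
    fin_cases i
    · simp
    · simp [Finset.card_erase_of_mem hb]
    · simp
    · simp [Finset.card_erase_of_mem (Finset.mem_compl.2 ha)]
  have hcompl : sᶜ.card = tᶜ.card := by rw [Finset.card_compl, Finset.card_compl, hst]
  obtain ⟨σ, hσ⟩ := exists_equiv_of_card_fiber_eq (color s v u) (color t v' u')
    fun i => by rw [hfiber hG, hfiber hH, hst, hcompl]
  have hmem : ∀ x, (σ x ∈ t ↔ x ∈ s) ∧ (x ∈ s → (σ x = u' ↔ x = u)) ∧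
      (x ∉ s → (σ x = v' ↔ x = v)) := by
    intro x
    have := hσ x
    simp only [color] at this
    split_ifs at this <;> simp_all
  refine nonempty_iso_of_bipartition hG.bipartite hH.bipartite σ (fun x => (hmem x).1)
    fun x hx y hy => ?_
  rw [hH.adj_iff ((hmem x).1.2 hx) (mt (hmem y).1.1 hy), hG.adj_iff hx hy, (hmem x).2.1 hx,
    (hmem y).2.2 hy]

theorem IsBroom.nonempty_iso {V : Type*} [Fintype V] {G H : SimpleGraph V}
    {s t : Finset V} {v u w b v' u' w' b' : V} (hG : IsBroom G s v u w b)
    (hH : IsBroom H t v' u' w' b') (hst : s.card = t.card) : Nonempty (G ≃g H) := by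
  classical
  let color : Finset V → V → V → V → V → V → Fin 6 := fun s v u w b x =>
    if x ∈ s then (if x = u then 0 else if x = w then 1 else 2)
    else (if x = v then 3 else if x = b then 4 else 5)
  have hfiber : ∀ {K : SimpleGraph V} {r : Finset V} {a c d e : V}, IsBroom K r a c d e → ∀ i,
      (Finset.univ.filter (color r a c d e · = i)).card =
        ![1, 1, r.card - 2, 1, 1, rᶜ.card - 2] i := by
    intro K r a c d e hK i
    obtain ⟨ha, he, hc, hd, hae, hcd, -, -⟩ := hK
    have hset : Finset.univ.filter (color r a c d e · = i) =
        ![{c}, {d}, (r.erase c).erase d, {a}, {e}, (rᶜ.erase a).erase e] i := by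
      ext x
      fin_cases i <;> simp [color] <;> grind
    rw [hset]
    fin_cases i
    · simp
    · simp
    · simp [Finset.card_erase_of_mem, hc, hd, hcd.symm, Nat.sub_sub]
    · simp
    · simp
    · simp [Finset.card_erase_of_mem, ha, he, hae.symm, Nat.sub_sub]
  have hcompl : sᶜ.card = tᶜ.card := by rw [Finset.card_compl, Finset.card_compl, hst]
  obtain ⟨σ, hσ⟩ := exists_equiv_of_card_fiber_eq (color s v u w b) (color t v' u' w' b')
    fun i => by rw [hfiber hG, hfiber hH, hst, hcompl]
  have hmem : ∀ x, (σ x ∈ t ↔ x ∈ s) ∧ (x ∈ s → (σ x = u' ↔ x = u) ∧ (σ x = w' ↔ x = w)) ∧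
      (x ∉ s → (σ x = v' ↔ x = v) ∧ (σ x = b' ↔ x = b)) := by
    intro x
    have h1 := hG.u_ne_w
    have h2 := hG.v_ne_b
    have h3 := hH.u_ne_w
    have h4 := hH.v_ne_b
    have := hσ x
    simp only [color] at this
    split_ifs at this <;> simp_all
  refine nonempty_iso_of_bipartition hG.bipartite hH.bipartite σ (fun x => (hmem x).1)
    fun x hx y hy => ?_
  rw [hH.adj_iff ((hmem x).1.2 hx) (mt (hmem y).1.1 hy), hG.adj_iff hx hy, ((hmem x).2.1 hx).1,
    ((hmem x).2.1 hx).2, ((hmem y).2.2 hy).1, ne_eq, ((hmem y).2.2 hy).2]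

theorem IsBroom.eq_of_common_neighbors {V : Type*} {G : SimpleGraph V}
    {s : Finset V} {v u w b : V} (hG : IsBroom G s v u w b) ⦃x y z z' : V⦄ (hxy : x ≠ y)
    (hxz : G.Adj x z) (hzy : G.Adj z y) (hxz' : G.Adj x z') (hzy' : G.Adj z' y) : z = z' := by
  have key : ∀ {x y}, G.Adj x y → (x ∈ s ∧ y ∉ s ∧ (y = v ∨ (y = b ∧ x = w) ∨ (y ≠ b ∧ x = u))) ∨
      (y ∈ s ∧ x ∉ s ∧ (x = v ∨ (x = b ∧ y = w) ∨ (x ≠ b ∧ y = u))) := by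
    intro x y hadj
    have hs := hG.bipartite hadj
    by_cases hx : x ∈ s
    · exact .inl ⟨hx, hs.1 hx, (hG.adj_iff hx (hs.1 hx)).1 hadj⟩
    · have hy : y ∈ s := by tauto
      exact .inr ⟨hy, hx, (hG.adj_iff hy hx).1 hadj.symm⟩
  have h1 := key hxz
  have h2 := key hzy
  have h3 := key hxz'
  have h4 := key hzy'
  have := hG.u_ne_w
  grind

theorem IsBroom.sum_degree {V : Type*} [Fintype V] [DecidableEq V] {G : SimpleGraph V}
    [DecidableRel G.Adj] {s : Finset V} {v u w b : V} (hG : IsBroom G s v u w b) (f : ℕ → ℕ) :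
    ∑ x, f (G.degree x) =
      f s.card + (f (sᶜ.card - 1) + (f 2 + (Fintype.card V - 3) * f 1)) := by
  have hbip := hG.bipartite
  have hadj := hG.adj_iff
  obtain ⟨hv, hb, hu, hw, hvb, huw, -, -⟩ := hG
  have hdv : G.degree v = s.card := by
    rw [← card_neighborFinset_eq_degree]
    congr 1
    ext x
    rw [mem_neighborFinset, G.adj_comm]
    exact ⟨fun h => by have := hbip h; tauto, fun hx => (hadj hx hv).2 (.inl rfl)⟩
  have hdu : G.degree u = sᶜ.card - 1 := by
    rw [← card_neighborFinset_eq_degree, ← Finset.card_erase_of_mem (Finset.mem_compl.2 hb)]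
    congr 1
    ext x
    rw [mem_neighborFinset, Finset.mem_erase, Finset.mem_compl]
    grind
  have hdw : G.degree w = 2 := by
    rw [← card_neighborFinset_eq_degree, ← Finset.card_pair hvb]
    congr 1
    ext x
    rw [mem_neighborFinset, Finset.mem_insert, Finset.mem_singleton]
    grind
  have hd1 : ∀ x, x ≠ v → x ≠ u → x ≠ w → G.degree x = 1 := by
    intro x hxv hxu hxw
    by_cases hx : x ∈ s
    · rw [← card_neighborFinset_eq_degree, ← Finset.card_singleton v]
      congr 1
      ext y
      rw [mem_neighborFinset, Finset.mem_singleton]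
      grind
    · rw [← card_neighborFinset_eq_degree, ← Finset.card_singleton (if x = b then w else u)]
      congr 1
      ext y
      rw [mem_neighborFinset, Finset.mem_singleton, G.adj_comm]
      grind
  have huv : u ≠ v := fun h => hv (h ▸ hu)
  have hwv : w ≠ v := fun h => hv (h ▸ hw)
  have hu' : u ∈ Finset.univ.erase v := Finset.mem_erase.2 ⟨huv, Finset.mem_univ _⟩
  have hw' : w ∈ (Finset.univ.erase v).erase u :=
    Finset.mem_erase.2 ⟨huw.symm, Finset.mem_erase.2 ⟨hwv, Finset.mem_univ _⟩⟩
  rw [← Finset.add_sum_erase _ _ (Finset.mem_univ v), ← Finset.add_sum_erase _ _ hu',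
    ← Finset.add_sum_erase _ _ hw', hdv, hdu, hdw, Finset.sum_congr rfl fun x hx => by
      simp only [Finset.mem_erase] at hx
      rw [hd1 x hx.2.2.1 hx.2.1 hx.1], Finset.sum_const, Finset.card_erase_of_mem hw',
    Finset.card_erase_of_mem hu', Finset.card_erase_of_mem (Finset.mem_univ v), smul_eq_mul,
    Finset.card_univ, Nat.sub_sub, Nat.sub_sub]

theorem adj_of_degree_eq_card {V : Type*} [Fintype V] {G : SimpleGraph V}
    [DecidableRel G.Adj] {s : Finset V} {v : V} (hs : ∀ ⦃x⦄, G.Adj v x → x ∈ s)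
    (hv : G.degree v = s.card) {x : V} (hx : x ∈ s) : G.Adj v x := by
  have hsub : G.neighborFinset v ⊆ s := fun y hy => hs ((mem_neighborFinset _ _ _).1 hy)
  have := Finset.eq_of_subset_of_card_le hsub (by rw [card_neighborFinset_eq_degree, hv])
  rwa [← mem_neighborFinset, this]

theorem eq_of_adj_of_degree_eq_one {V : Type*} [Fintype V] {G : SimpleGraph V}
    [DecidableRel G.Adj] {x y z : V} (hx : G.degree x = 1) (hy : G.Adj x y) (hz : G.Adj x z) :
    y = z :=
  (degree_eq_one_iff_existsUnique_adj.1 hx).unique hy hz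

theorem isDoubleStar_of_degree {V : Type*} [Fintype V] [DecidableEq V] {G : SimpleGraph V}
    [DecidableRel G.Adj] {s : Finset V} {v u : V}
    (hs : ∀ ⦃x y⦄, G.Adj x y → (x ∈ s ↔ y ∉ s)) (hv : v ∉ s) (hu : u ∈ s)
    (hdv : G.degree v = s.card) (hdu : G.degree u = sᶜ.card)
    (hleaf : ∀ y ∉ s, y ≠ v → G.degree y = 1) : IsDoubleStar G s v u := by
  have hvadj : ∀ x ∈ s, G.Adj v x := fun x hx =>
    adj_of_degree_eq_card (fun y h => by have := hs h; tauto) hdv hx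
  have huadj : ∀ y ∉ s, G.Adj u y := fun y hy =>
    adj_of_degree_eq_card (s := sᶜ) (fun y h => Finset.mem_compl.2 ((hs h).1 hu)) hdu
      (Finset.mem_compl.2 hy)
  refine ⟨hv, hu, hs, fun x y hx hy => ⟨fun hxy => ?_, ?_⟩⟩
  · by_cases hyv : y = v
    · exact .inl hyv
    · exact .inr (eq_of_adj_of_degree_eq_one (hleaf y hy hyv) hxy.symm (huadj y hy).symm)
  · rintro (rfl | rfl)
    · exact (hvadj x hx).symm
    · exact huadj y hy

theorem exists_isBroom_of_degree {V : Type*} [Fintype V] [DecidableEq V] {G : SimpleGraph V}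
    [DecidableRel G.Adj] {s : Finset V} {v u w : V}
    (hs : ∀ ⦃x y⦄, G.Adj x y → (x ∈ s ↔ y ∉ s)) (hv : v ∉ s) (hu : u ∈ s) (hw : w ∈ s)
    (huw : u ≠ w) (hdv : G.degree v = s.card) (hdw : G.degree w = 2)
    (hleaf : ∀ y ∉ s, y ≠ v → G.degree y = 1)
    (hleaf' : ∀ x ∈ s, x ≠ u → x ≠ w → G.degree x = 1) : ∃ b, IsBroom G s v u w b := by
  have hvadj : ∀ x ∈ s, G.Adj v x := fun x hx =>
    adj_of_degree_eq_card (fun y h => by have := hs h; tauto) hdv hx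
  have hvw : v ∈ G.neighborFinset w := (mem_neighborFinset _ _ _).2 (hvadj w hw).symm
  obtain ⟨b, hb⟩ : ∃ b, (G.neighborFinset w).erase v = {b} := by
    rw [← Finset.card_eq_one, Finset.card_erase_of_mem hvw, card_neighborFinset_eq_degree, hdw]
  have hwadj : ∀ y, y ≠ v → (G.Adj w y ↔ y = b) := fun y hy => by
    rw [← Finset.mem_singleton, ← hb, Finset.mem_erase, mem_neighborFinset]
    tauto
  have hbv : b ≠ v := by
    have : b ∈ (G.neighborFinset w).erase v := by rw [hb, Finset.mem_singleton]
    exact Finset.ne_of_mem_erase this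
  have hwb : G.Adj w b := (hwadj b hbv).2 rfl
  have hforward : ∀ x ∈ s, ∀ y ∉ s, G.Adj x y → y = v ∨ (y = b ∧ x = w) ∨ (y ≠ b ∧ x = u) := by
    intro x hx y hy hxy
    by_cases hyv : y = v
    · exact .inl hyv
    by_cases hyb : y = b
    · subst hyb
      exact .inr (.inl ⟨rfl, eq_of_adj_of_degree_eq_one (hleaf y hy hyv) hxy.symm hwb.symm⟩)
    refine .inr (.inr ⟨hyb, by_contra fun hxu => ?_⟩)
    have hxw : x ≠ w := by
      rintro rfl
      exact hyb ((hwadj y hyv).1 hxy)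
    exact hyv (eq_of_adj_of_degree_eq_one (hleaf' x hx hxu hxw) hxy (hvadj x hx).symm)
  refine ⟨b, hv, (hs hwb).1 hw, hu, hw, hbv.symm, huw, hs, fun x y hx hy =>
    ⟨hforward x hx y hy, ?_⟩⟩
  rintro (rfl | ⟨rfl, rfl⟩ | ⟨hyb, rfl⟩)
  · exact (hvadj x hx).symm
  · exact hwb
  · by_cases hyv : y = v
    · exact hyv ▸ (hvadj x hx).symm
    obtain ⟨z, hz⟩ := (G.degree_pos_iff_exists_adj y).1 (by rw [hleaf y hy hyv]; exact one_pos)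
    have hzs : z ∈ s := by have := hs hz; tauto
    have := hforward z hzs y hy hz.symm
    have hzx : z = x := by tauto
    exact hzx ▸ hz.symm

/-! ### The trees `B` and `D` -/

theorem card_filter_ne_and_le {n a m : ℕ} (ha : a ≤ m) (hm : m < n) :
    (Finset.univ.filter fun i : Fin n => i.val ≠ a ∧ i.val ≤ m).card = m := by
  have : (Finset.univ.filter fun i : Fin n => i.val ≠ a ∧ i.val ≤ m) =
      (Finset.univ.filter fun i : Fin n => i.val < m + 1).erase ⟨a, by omega⟩ := by
    ext i
    simp [Fin.ext_iff]
  rw [this, Finset.card_erase_of_mem (by simp; omega), Fin.card_filter_val_lt]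
  omega

theorem isDoubleStar_BTree {p q : ℕ} (hp : 1 ≤ p) (hq : 1 ≤ q) :
    IsDoubleStar (BTree p q 0 0)
      (Finset.univ.filter fun i : Fin (p + q) => i.val ≠ 0 ∧ i.val ≤ q)
      ⟨0, by omega⟩ ⟨1, by omega⟩ := by
  constructor
  · simp
  · simp; omega
  · intro x y hxy
    simp only [BTree, fromRel_adj, Fin.ext_iff, ne_eq] at hxy
    simp only [Finset.mem_filter, Finset.mem_univ, true_and]
    omega
  · intro x y hx hy
    simp only [Finset.mem_filter, Finset.mem_univ, true_and] at hx hy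
    simp only [BTree, fromRel_adj, Fin.ext_iff, ne_eq]
    omega

theorem isBroom_BTree {p q : ℕ} (hp : 2 ≤ p) (hq : 3 ≤ q) :
    IsBroom (BTree p q 0 1)
      (Finset.univ.filter fun i : Fin (p + q) => i.val ≠ 0 ∧ i.val ≤ q)
      ⟨0, by omega⟩ ⟨1, by omega⟩ ⟨3, by omega⟩ ⟨q + 1, by omega⟩ := by
  constructor
  · simp
  · simp
  · simp; omega
  · simp; omega
  · simp [Fin.ext_iff]
  · simp [Fin.ext_iff]
  · intro x y hxy
    simp only [BTree, fromRel_adj, Fin.ext_iff, ne_eq] at hxy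
    simp only [Finset.mem_filter, Finset.mem_univ, true_and]
    omega
  · intro x y hx hy
    simp only [Finset.mem_filter, Finset.mem_univ, true_and] at hx hy
    simp only [BTree, fromRel_adj, Fin.ext_iff, ne_eq]
    omega

theorem isBroom_DTree {p q : ℕ} (hp : 3 ≤ p) (hq : 2 ≤ q) :
    IsBroom (DTree p q 0 1)
      (Finset.univ.filter fun i : Fin (p + q) => i.val ≠ 1 ∧ i.val ≤ p)
      ⟨1, by omega⟩ ⟨0, by omega⟩ ⟨3, by omega⟩ ⟨p + 1, by omega⟩ := by
  constructor
  · simp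
  · simp
  · simp
  · simp; omega
  · simp [Fin.ext_iff]; omega
  · simp [Fin.ext_iff]
  · intro x y hxy
    simp only [DTree, fromRel_adj, Fin.ext_iff, ne_eq] at hxy
    simp only [Finset.mem_filter, Finset.mem_univ, true_and]
    omega
  · intro x y hx hy
    simp only [Finset.mem_filter, Finset.mem_univ, true_and] at hx hy
    simp only [DTree, fromRel_adj, Fin.ext_iff, ne_eq]
    omega

/-! ### Comparison of degrees -/

theorem sum_sq_of_excess {V : Type*} {s : Finset V} {d : V → ℕ} (hd : ∀ x, 0 < d x) {m : ℕ}
    (hm : ∑ x ∈ s, d x = m + s.card) :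
    ∑ x ∈ s, (d x - 1) = m ∧
      ∑ x ∈ s, d x ^ 2 = ∑ x ∈ s, (d x - 1) ^ 2 + 2 * m + s.card := by
  have hm' : ∑ x ∈ s, (d x - 1) = m := by
    have : ∑ x ∈ s, d x = ∑ x ∈ s, ((d x - 1) + 1) :=
      Finset.sum_congr rfl fun x _ => by have := hd x; omega
    rw [Finset.sum_add_distrib, Finset.sum_const, smul_eq_mul, mul_one] at this
    omega
  refine ⟨hm', ?_⟩
  rw [← hm', Finset.mul_sum, Finset.card_eq_sum_ones, ← Finset.sum_add_distrib,
    ← Finset.sum_add_distrib]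
  refine Finset.sum_congr rfl fun x _ => ?_
  obtain ⟨k, hk⟩ := Nat.exists_eq_add_of_lt (hd x)
  rw [hk]
  simp only [zero_add, Nat.add_sub_cancel]
  ring

theorem excess_bound {p q X Y : ℕ} (hpq : p < q) (h : q + 4 < 2 * p)
    (hXY : (X ≤ (q - 1) ^ 2 ∧ Y ≤ (p - 1 - 2) ^ 2 + 4) ∨
      (X ≤ (q - 1 - 1) ^ 2 + 1 ∧ (Y ≤ (p - 1 - 1) ^ 2 + 1 ∨ Y ≤ (p - 1 - 2) ^ 2 + 4)) ∨
      (X ≤ (q - 1 - 2) ^ 2 + 4 ∧ Y ≤ (p - 1) ^ 2)) :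
    X + 2 * (q - 1) + p + (Y + 2 * (p - 1) + q) <
      p ^ 2 + ((q - 1) ^ 2 + (2 ^ 2 + (p + q - 3))) := by
  obtain ⟨a, rfl⟩ := Nat.exists_eq_add_of_le' (show 5 ≤ p by omega)
  obtain ⟨b, rfl⟩ := Nat.exists_eq_add_of_le' (show 5 ≤ q by omega)
  have hexp : a + 5 + (b + 5) - 3 = a + b + 7 := by omega
  simp only [Nat.reduceSubDiff, hexp] at *
  rcases hXY with ⟨hX, hY⟩ | ⟨hX, hY | hY⟩ | ⟨hX, hY⟩ <;> ring_nf at * <;> omega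

/-- A tree with a `(p, q)`-bipartition that is none of `B_{p,q}^{0,0}`, `B_{p,q}^{0,1}` and
`D_{p,q}^{0,1}` has a smaller sum of squared degrees than `D_{p,q}^{0,1}`. -/
theorem TreeBip.sum_sq_degree_lt {p q : ℕ} (hpq : p < q) (h : q + 4 < 2 * p)
    {T : SimpleGraph (Fin (p + q))} [DecidableRel T.Adj] (hT : TreeBip p q T)
    (h0 : ¬ Nonempty (T ≃g BTree p q 0 0))
    (h1 : ¬ Nonempty (T ≃g BTree p q 0 1))
    (h2 : ¬ Nonempty (T ≃g DTree p q 0 1)) :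
    ∑ x, T.degree x ^ 2 < p ^ 2 + ((q - 1) ^ 2 + (2 ^ 2 + (p + q - 3))) := by
  obtain ⟨htree, A, hA, hbip⟩ := hT
  have hAc : Aᶜ.card = q := by
    rw [Finset.card_compl, hA, Fintype.card_fin]
    omega
  have hbip' : ∀ ⦃x y⦄, T.Adj x y → (x ∈ Aᶜ ↔ y ∉ Aᶜ) := fun x y hxy => by
    have := hbip hxy
    simp only [Finset.mem_compl]
    tauto
  have : Nontrivial (Fin (p + q)) := Fin.nontrivial_iff_two_le.2 (by omega)
  have hpos : ∀ x, 0 < T.degree x := fun x =>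
    htree.connected.preconnected.degree_pos_of_nontrivial x
  have hwith : T.IsBipartiteWith (A : Set (Fin (p + q))) (Aᶜ : Finset (Fin (p + q))) :=
    ⟨by rw [Finset.disjoint_coe]; exact disjoint_compl_right, fun x y hxy => by
      have := hbip hxy
      simp only [Finset.coe_compl, Set.mem_compl_iff, Finset.mem_coe]
      tauto⟩
  have hedges := htree.card_edgeFinset
  rw [Fintype.card_fin] at hedges
  obtain ⟨hsA, hsqA⟩ := sum_sq_of_excess (s := A) (m := q - 1) hpos
    (by rw [isBipartiteWith_sum_degrees_eq_card_edges hwith, hA]; omega)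
  obtain ⟨hsB, hsqB⟩ := sum_sq_of_excess (s := Aᶜ) (m := p - 1) hpos
    (by rw [isBipartiteWith_sum_degrees_eq_card_edges' hwith, hAc]; omega)
  rw [← Finset.sum_add_sum_compl A, hsqA, hsqB, hA, hAc]
  have hleA := Finset.sum_sq_le_sq_sum (s := A) (e := fun x => T.degree x - 1)
  have hleB := Finset.sum_sq_le_sq_sum (s := Aᶜ) (e := fun x => T.degree x - 1)
  rw [hsA] at hleA
  rw [hsB] at hleB
  have hleaf : ∀ {x}, T.degree x - 1 = 0 → T.degree x = 1 := fun {x} hx => by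
    have := hpos x
    omega
  have hcardB : (Finset.univ.filter fun i : Fin (p + q) => i.val ≠ 0 ∧ i.val ≤ q).card = q :=
    card_filter_ne_and_le (by omega) (by omega)
  have hcardD : (Finset.univ.filter fun i : Fin (p + q) => i.val ≠ 1 ∧ i.val ≤ p).card = p :=
    card_filter_ne_and_le (by omega) (by omega)
  rcases Finset.sum_sq_trichotomy hsA (by omega) with ⟨x, hx, hdx⟩ | ⟨x, hx, hdx⟩ | hA3
  · have hxA : T.degree x = Aᶜ.card := by omega
    have hleafA : ∀ y ∉ Aᶜ, y ≠ x → T.degree y = 1 := fun y hy hyx =>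
      hleaf (Finset.eq_zero_of_eq_sum hsA hx hdx (by simpa using hy) hyx)
    rcases Finset.sum_sq_trichotomy hsB (by omega) with ⟨y, hy, hdy⟩ | ⟨y, hy, hdy⟩ | hB3
    · exact absurd ((isDoubleStar_of_degree hbip' (v := x) (u := y) (by simpa using hx) hy hxA
        (by rw [compl_compl]; omega) hleafA).nonempty_iso
        (isDoubleStar_BTree (by omega) (by omega)) (hAc.trans hcardB.symm)) h0
    · obtain ⟨⟨w, hw, hwy, hdw, hrest⟩, -⟩ := Finset.exists_near_sum hsB hy hdy
      obtain ⟨c, hc⟩ := exists_isBroom_of_degree hbip' (v := x) (by simpa using hx) hy hw hwy.symm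
        hxA (by omega) hleafA fun z hz hzy hzw => hleaf (hrest z hz hzy hzw)
      exact absurd (hc.nonempty_iso (isBroom_BTree (by omega) (by omega))
        (hAc.trans hcardB.symm)) h1
    · exact excess_bound hpq h (.inl ⟨hleA, hB3⟩)
  · obtain ⟨⟨w, hw, hwx, hdw, hrest⟩, hsq⟩ := Finset.exists_near_sum hsA hx hdx
    rcases Finset.sum_sq_trichotomy hsB (by omega) with ⟨y, hy, hdy⟩ | ⟨y, hy, hdy⟩ | hB3
    · obtain ⟨c, hc⟩ := exists_isBroom_of_degree hbip (v := y) (by simpa using hy) hx hw hwx.symm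
        (by omega) (by omega) (fun z hz hzy =>
          hleaf (Finset.eq_zero_of_eq_sum hsB hy hdy (by simpa using hz) hzy))
        fun z hz hzx hzw => hleaf (hrest z hz hzx hzw)
      exact absurd (hc.nonempty_iso (isBroom_DTree (by omega) (by omega))
        (hA.trans hcardD.symm)) h2
    · have hsqB' := (Finset.exists_near_sum hsB hy hdy).2
      exact excess_bound hpq h (.inr (.inl ⟨hsq.le, .inl hsqB'.le⟩))
    · exact excess_bound hpq h (.inr (.inl ⟨hsq.le, .inr hB3⟩))
  · exact excess_bound hpq h (.inr (.inr ⟨hA3, hleB⟩))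

/-- For `4 ≤ p < q`, `n = p + q` and `2p > q + 4`, every tree
`T ∈ 𝒯_n^{p,q}` isomorphic to none of `B_{p,q}^{0,0}`, `B_{p,q}^{0,1}`,
`D_{p,q}^{0,1}` satisfies `T ≺_s D_{p,q}^{0,1}`: in this case `D_{p,q}^{0,1}` is the
unique third last tree in the S-order among `𝒯_n^{p,q}`. -/
theorem stmt_5 (p q : ℕ) (hp : 4 ≤ p) (hpq : p < q) (h : q + 4 < 2 * p)
    (T : SimpleGraph (Fin (p + q))) (hT : TreeBip p q T)
    (h0 : ¬ Nonempty (T ≃g BTree p q 0 0))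
    (h1 : ¬ Nonempty (T ≃g BTree p q 0 1))
    (h2 : ¬ Nonempty (T ≃g DTree p q 0 1)) :
    SLt T (DTree p q 0 1) := by
  classical
  have hbroom := isBroom_DTree (p := p) (q := q) (by omega) (by omega)
  have hcard : (Finset.univ.filter fun i : Fin (p + q) => i.val ≠ 1 ∧ i.val ≤ p).card = p :=
    card_filter_ne_and_le (by omega) (by omega)
  have hsumD := hbroom.sum_degree fun d => d
  have hsqD := hbroom.sum_degree fun d => d ^ 2
  rw [Finset.card_compl, hcard, Fintype.card_fin, Nat.add_sub_cancel_left] at hsumD hsqD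
  simp only [one_pow, mul_one] at hsumD hsqD
  have hlt := hT.sum_sq_degree_lt hpq h h0 h1 h2
  rw [← hsqD] at hlt
  obtain ⟨htree, A, -, hbip⟩ := hT
  have hsum : ∑ x, T.degree x = ∑ x, (DTree p q 0 1).degree x := by
    have := htree.card_edgeFinset
    rw [Fintype.card_fin] at this
    rw [sum_degrees_eq_twice_card_edges, hsumD]
    omega
  have hfourT := spectralMoment_four_add htree.isAcyclic.eq_of_common_neighbors
  have hfourD := spectralMoment_four_add hbroom.eq_of_common_neighbors
  refine ⟨4, by omega, by rw [Fintype.card_fin]; omega, fun i hi => ?_, ?_⟩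
  · interval_cases i
    · rw [spectralMoment_zero, spectralMoment_zero]
    · rw [spectralMoment_one, spectralMoment_one]
    · rw [spectralMoment_two, spectralMoment_two, hsum]
    · rw [spectralMoment_three_of_bipartition hbip,
        spectralMoment_three_of_bipartition hbroom.bipartite]
  · rw [hsum] at hfourT
    have : ((∑ x, T.degree x ^ 2 : ℕ) : ℝ) < ((∑ x, (DTree p q 0 1).degree x ^ 2 : ℕ) : ℝ) := by
      exact_mod_cast hlt
    linarith
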